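/- Every finite nonempty simple graph G without isolated vertices satisfies χ'_CF(G) ≤ 3⌈log₂ Δ(G)⌉ + 1, where Δ(G) denotes the maximum degree of G. -/

import Mathlib

open SimpleGraph

/-- An edge `e` is *satisfied* by the colouring `c` of (the edges of) the graph `H` if some
colour is assigned by `c` to exactly one edge of `H` incident to an endpoint of `e`. -/
def CFSatisfies {V : Type*} {k : ℕ} (H : SimpleGraph V) (c : Sym2 V → Fin k) (e : Sym2 V) :
    Prop :=
  ∃ col : Fin k, ∃! f : Sym2 V, f ∈ H.edgeSet ∧ (∃ x ∈ e, x ∈ f) ∧ c f = col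

/-- The conflict-free chromatic index `χ'_CF(G)`: the least `k` such that `G` admits an edge
colouring with `k` colours in which every edge of `G` is satisfied. -/
noncomputable def cfChromIndex {V : Type*} (G : SimpleGraph V) : ℕ :=
  sInf {k | ∃ c : Sym2 V → Fin k, ∀ e ∈ G.edgeSet, CFSatisfies G c e}

/-- The parameter `χ'_sCF(G)`: the least `k` for which some subgraph `H` of `G` admits an edge
colouring with `k` colours such that every edge of `G` is satisfied. -/
noncomputable def scfChromIndex {V : Type*} (G : SimpleGraph V) : ℕ :=
  sInf {k | ∃ H : SimpleGraph V, H ≤ G ∧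
    ∃ c : Sym2 V → Fin k, ∀ e ∈ G.edgeSet, CFSatisfies H c e}

/-!
Label the edges of a matching with `3` labels, where `none` counts as a fourth class of vertices,
and choose the labelled matching with the fewest *residual* edges, that is, non-matching edges
inside a class. Read as colours of the matching edges, the labels satisfy every non-residual edge.
If `x` has a residual edge, then `x` together with its partner, or with a residual neighbour if `x`
is unmatched, can be moved into any of the four classes. The residual edges meeting this pair
`x, y` after the four moves are disjoint subsets of `E_G[xy]`, which has fewer than `2 Δ(G)`
elements, so one of the moves leaves fewer than `Δ(G) / 2` of them; by minimality the residual
degree of `x` is then less than `Δ(G) / 2` already. Thus three new colours halve the maximum degree,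
and one extra colour is spent on the edges that are never coloured.
-/

/-- The closed edge neighbourhood `E_H[e]`, where `e` need not be an edge of `H`. -/
def closedEdgeNeighborSet {V : Type*} (H : SimpleGraph V) (e : Sym2 V) : Set (Sym2 V) :=
  {f | f ∈ H.edgeSet ∧ ∃ x ∈ e, x ∈ f}

/-- `G` has a partial conflict-free edge colouring with `n` colours: `none` stands for an uncoloured
edge, and every edge of `G`, coloured or not, sees some genuine colour exactly once. -/
def PartialCFColorable {V : Type*} (G : SimpleGraph V) (n : ℕ) : Prop :=
  ∃ c : Sym2 V → Option (Fin n), ∀ e ∈ G.edgeSet, ∃ i, ∃! f,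
    f ∈ closedEdgeNeighborSet G e ∧ c f = some i

/-- A matching of `G` whose edges carry labels in `Fin r`, recorded on the matched vertices; `none`
is the label of the unmatched ones. Together the labels partition `V` into `r + 1` classes. -/
structure LabelledMatching {V : Type*} (G : SimpleGraph V) (r : ℕ) where
  toSubgraph : G.Subgraph
  isMatching : toSubgraph.IsMatching
  label : V → Option (Fin r)
  label_eq_none_iff : ∀ v, label v = none ↔ v ∉ toSubgraph.verts
  label_eq_of_adj : ∀ u v, toSubgraph.Adj u v → label u = label v

section ClosedEdgeNeighborSet

variable {V : Type*} {H K : SimpleGraph V}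

lemma self_mem_closedEdgeNeighborSet {e : Sym2 V} (he : e ∈ H.edgeSet) :
    e ∈ closedEdgeNeighborSet H e :=
  ⟨he, e.out.1, e.out_fst_mem, e.out_fst_mem⟩

lemma closedEdgeNeighborSet_mono (h : H ≤ K) (e : Sym2 V) :
    closedEdgeNeighborSet H e ⊆ closedEdgeNeighborSet K e :=
  fun _ hf ↦ ⟨edgeSet_mono h hf.1, hf.2⟩

lemma closedEdgeNeighborSet_mk (x y : V) :
    closedEdgeNeighborSet H s(x, y) = H.incidenceSet x ∪ H.incidenceSet y := by
  ext f
  simp [closedEdgeNeighborSet, incidenceSet, and_or_left]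

lemma exists_eq_mk_of_mem_closedEdgeNeighborSet {x y : V} {f : Sym2 V}
    (hf : f ∈ closedEdgeNeighborSet H s(x, y)) :
    ∃ a b, f = s(a, b) ∧ H.Adj a b ∧ (a = x ∨ a = y) := by
  obtain ⟨hfH, a, ha, haf⟩ := hf
  obtain ⟨b, rfl⟩ := Sym2.mem_iff_exists.1 haf
  exact ⟨a, b, rfl, hfH, Sym2.mem_iff.1 ha⟩

lemma ncard_closedEdgeNeighborSet_le_of_ncard_edgeSet_le [Finite V] {e : Sym2 V}
    (hle : H.edgeSet.ncard ≤ K.edgeSet.ncard)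
    (hagree : ∀ u w, u ∉ e → w ∉ e → (H.Adj u w ↔ K.Adj u w)) :
    (closedEdgeNeighborSet H e).ncard ≤ (closedEdgeNeighborSet K e).ncard := by
  let touching : Set (Sym2 V) := {f | ∃ x ∈ e, x ∈ f}
  have hoff : H.edgeSet \ touching = K.edgeSet \ touching := by
    ext ⟨u, w⟩
    simp only [touching, Set.mem_sdiff, Set.mem_ofPred_eq]
    grind [mem_edgeSet]
  have hH := Set.ncard_inter_add_ncard_sdiff_eq_ncard H.edgeSet touching
  have hK := Set.ncard_inter_add_ncard_sdiff_eq_ncard K.edgeSet touching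
  rw [hoff] at hH
  change (H.edgeSet ∩ touching).ncard ≤ (K.edgeSet ∩ touching).ncard
  lia

lemma ncard_incidenceSet (v : V) [Fintype (H.neighborSet v)] :
    (H.incidenceSet v).ncard = H.degree v := by
  classical
  rw [← H.card_incidenceFinset_eq_degree v, ← Set.ncard_coe_finset, coe_incidenceFinset]

lemma finite_incidenceSet (v : V) [Finite (H.neighborSet v)] : (H.incidenceSet v).Finite := by
  classical
  have := Fintype.ofFinite (H.neighborSet v)
  exact Set.toFinite _

lemma finite_closedEdgeNeighborSet (x y : V) [Finite (H.neighborSet x)]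
    [Finite (H.neighborSet y)] : (closedEdgeNeighborSet H s(x, y)).Finite :=
  closedEdgeNeighborSet_mk x y ▸ (finite_incidenceSet x).union (finite_incidenceSet y)

lemma ncard_closedEdgeNeighborSet_add_one {x y : V} [Fintype (H.neighborSet x)]
    [Fintype (H.neighborSet y)] (hxy : H.Adj x y) :
    (closedEdgeNeighborSet H s(x, y)).ncard + 1 = H.degree x + H.degree y := by
  rw [closedEdgeNeighborSet_mk, ← ncard_incidenceSet, ← ncard_incidenceSet,
    ← Set.ncard_union_add_ncard_inter _ _ (finite_incidenceSet x) (finite_incidenceSet y),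
    H.incidenceSet_inter_incidenceSet_of_adj hxy, Set.ncard_singleton]

lemma degree_le_ncard_closedEdgeNeighborSet (x y : V) [Fintype (H.neighborSet x)]
    [Finite (H.neighborSet y)] : H.degree x ≤ (closedEdgeNeighborSet H s(x, y)).ncard := by
  rw [← ncard_incidenceSet]
  refine Set.ncard_le_ncard ?_ (finite_closedEdgeNeighborSet x y)
  rw [closedEdgeNeighborSet_mk]
  exact Set.subset_union_left

end ClosedEdgeNeighborSet

section PartialCFColorable

variable {V : Type*} {G A B : SimpleGraph V} {m n : ℕ}

lemma partialCFColorable_bot : PartialCFColorable (⊥ : SimpleGraph V) 0 :=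
  ⟨fun _ ↦ none, by simp⟩

lemma PartialCFColorable.sup (hA : PartialCFColorable A m) (hB : PartialCFColorable B n)
    (hAB : Disjoint A B) : PartialCFColorable (A ⊔ B) (m + n) := by
  classical
  obtain ⟨a, ha⟩ := hA
  obtain ⟨b, hb⟩ := hB
  have hdisj : ∀ f, f ∈ A.edgeSet → f ∉ B.edgeSet := fun f hfA hfB ↦
    (disjoint_edgeSet.2 hAB).le_bot ⟨hfA, hfB⟩
  let c : Sym2 V → Option (Fin (m + n)) := fun f ↦
    if f ∈ A.edgeSet then (a f).map (Fin.castAdd n) else (b f).map (Fin.natAdd m)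
  have hne (i : Fin m) (j : Fin n) : Fin.castAdd n i ≠ Fin.natAdd m j :=
    Fin.ne_of_lt (Fin.lt_def.2 (i.isLt.trans_le (Nat.le_add_right m j)))
  have hcA (e f : Sym2 V) (i : Fin m) : f ∈ closedEdgeNeighborSet (A ⊔ B) e ∧
      c f = some (Fin.castAdd n i) ↔ f ∈ closedEdgeNeighborSet A e ∧ a f = some i := by
    by_cases hf : f ∈ A.edgeSet <;>
      simp [c, closedEdgeNeighborSet, hf, (hne _ _).symm, -Fin.natAdd_eq_addNat]
  have hcB (e f : Sym2 V) (i : Fin n) : f ∈ closedEdgeNeighborSet (A ⊔ B) e ∧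
      c f = some (Fin.natAdd m i) ↔ f ∈ closedEdgeNeighborSet B e ∧ b f = some i := by
    by_cases hf : f ∈ A.edgeSet <;>
      simp [c, closedEdgeNeighborSet, hf, hdisj, hne, Fin.natAdd_inj]
  refine ⟨c, fun e he ↦ ?_⟩
  rw [edgeSet_sup] at he
  obtain he | he := he
  · obtain ⟨i, hi⟩ := ha e he
    exact ⟨Fin.castAdd n i, by simpa only [hcA] using hi⟩
  · obtain ⟨i, hi⟩ := hb e he
    exact ⟨Fin.natAdd m i, by simpa only [hcB] using hi⟩

lemma PartialCFColorable.cfChromIndex_le (h : PartialCFColorable G n) :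
    cfChromIndex G ≤ n + 1 := by
  obtain ⟨c, hc⟩ := h
  refine Nat.sInf_le ⟨fun f ↦ (finSuccEquiv n).symm (c f), fun e he ↦ ?_⟩
  obtain ⟨i, hi⟩ := hc e he
  refine ⟨(finSuccEquiv n).symm (some i), ?_⟩
  simpa only [closedEdgeNeighborSet, Set.mem_ofPred_eq, and_assoc, EmbeddingLike.apply_eq_iff_eq]
    using hi

end PartialCFColorable

namespace LabelledMatching

variable {V : Type*} {G : SimpleGraph V} {r : ℕ}

instance : Nonempty (LabelledMatching G r) :=
  ⟨⟨⊥, by simp [Subgraph.IsMatching], fun _ ↦ none, by simp, by simp⟩⟩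

variable (P : LabelledMatching G r)

/-- The edges of `G` inside a label class which are not in the matching: the edges that the
labels, read as colours of the matching edges, may fail to satisfy. -/
def residual : SimpleGraph V where
  Adj u w := G.Adj u w ∧ P.label u = P.label w ∧ ¬ P.toSubgraph.Adj u w
  symm := ⟨fun _ _ h ↦ ⟨h.1.symm, h.2.1.symm, fun h' ↦ h.2.2 h'.symm⟩⟩
  loopless := ⟨fun _ h ↦ h.1.ne rfl⟩

lemma residual_le : P.residual ≤ G := fun _ _ h ↦ h.1

lemma exists_adj_of_label_eq_some {x : V} {i : Fin r} (hx : P.label x = some i) :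
    ∃ y, P.toSubgraph.Adj x y := by
  have hx : x ∈ P.toSubgraph.verts := by
    by_contra h
    simp [(P.label_eq_none_iff x).2 h] at hx
  exact (P.isMatching hx).exists

lemma exists_edge_label : ∃ c : Sym2 V → Option (Fin r),
    (∀ u v, P.toSubgraph.Adj u v → c s(u, v) = P.label u) ∧
    ∀ u v, ¬ P.toSubgraph.Adj u v → c s(u, v) = none := by
  classical
  refine ⟨fun f ↦ if f ∈ P.toSubgraph.edgeSet then P.label f.out.1 else none, fun u v huv ↦ ?_,
    fun u v huv ↦ if_neg huv⟩
  refine (if_pos huv).trans ?_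
  obtain h | h := Sym2.mem_iff.1 (Sym2.out_fst_mem s(u, v)) <;> rw [h]
  exact (P.label_eq_of_adj u v huv).symm

lemma existsUnique_mem_closedEdgeNeighborSet_label_eq {c : Sym2 V → Option (Fin r)}
    (hc : ∀ u v, P.toSubgraph.Adj u v → c s(u, v) = P.label u)
    (hc_none : ∀ u v, ¬ P.toSubgraph.Adj u v → c s(u, v) = none) {u w : V} {i : Fin r}
    (huw : (G \ P.residual).Adj u w) (hu : P.label u = some i) :
    ∃! f, f ∈ closedEdgeNeighborSet (G \ P.residual) s(u, w) ∧ c f = some i := by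
  have hmatched (hw : P.label w = some i) : P.toSubgraph.Adj u w := by
    by_contra h
    exact huw.2 ⟨huw.1, hu.trans hw.symm, h⟩
  obtain ⟨v, huv⟩ := P.exists_adj_of_label_eq_some hu
  refine ⟨s(u, v), ⟨⟨⟨huv.adj_sub, fun h ↦ h.2.2 huv⟩, u, by simp⟩, (hc u v huv).trans hu⟩, ?_⟩
  rintro f ⟨hf, hfi⟩
  obtain ⟨a, b, rfl, -, ha⟩ := exists_eq_mk_of_mem_closedEdgeNeighborSet hf
  have hab : P.toSubgraph.Adj a b := by
    by_contra h
    simp [hc_none a b h] at hfi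
  rw [hc a b hab] at hfi
  obtain rfl | rfl := ha
  · rw [P.isMatching.eq_of_adj_left hab huv]
  · have hua := hmatched hfi
    rw [P.isMatching.eq_of_adj_left hab hua.symm, P.isMatching.eq_of_adj_left huv hua,
      Sym2.eq_swap]

lemma partialCFColorable_sdiff_residual : PartialCFColorable (G \ P.residual) r := by
  obtain ⟨c, hc, hc_none⟩ := P.exists_edge_label
  refine ⟨c, fun e ↦ e.ind fun u w huw ↦ ?_⟩
  rw [mem_edgeSet] at huw
  obtain hu | ⟨i, hi⟩ := (P.label u).eq_none_or_eq_some
  · obtain hw | ⟨i, hi⟩ := (P.label w).eq_none_or_eq_some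
    · refine absurd ⟨huw.1, hu.trans hw.symm, fun h ↦ ?_⟩ huw.2
      exact (P.label_eq_none_iff u).1 hu h.fst_mem
    · rw [Sym2.eq_swap]
      exact ⟨i, P.existsUnique_mem_closedEdgeNeighborSet_label_eq hc hc_none huw.symm hi⟩
  · exact ⟨i, P.existsUnique_mem_closedEdgeNeighborSet_label_eq hc hc_none huw hi⟩

/-- `x` and `y` are adjacent in `G` and either matched to each other or both unmatched, so that the
pair can be put into any label class. -/
def Movable (x y : V) : Prop :=
  G.Adj x y ∧ (P.toSubgraph.Adj x y ∨ P.label x = none ∧ P.label y = none)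

lemma exists_movable {x w : V} (h : P.residual.Adj x w) : ∃ y, P.Movable x y := by
  obtain hx | ⟨i, hi⟩ := (P.label x).eq_none_or_eq_some
  · exact ⟨w, h.1, .inr ⟨hx, h.2.1.symm.trans hx⟩⟩
  · obtain ⟨y, hxy⟩ := P.exists_adj_of_label_eq_some hi
    exact ⟨y, hxy.adj_sub, .inl hxy⟩

variable {P} {x y : V}

lemma Movable.mem_iff_of_adj (h : P.Movable x y) {u w : V} (huw : P.toSubgraph.Adj u w) :
    u = x ∨ u = y ↔ w = x ∨ w = y := by
  have := P.label_eq_none_iff u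
  have := P.label_eq_none_iff w
  have := huw.fst_mem
  have := huw.snd_mem
  have := @P.isMatching.eq_of_adj_left
  obtain ⟨-, hxy | hxy⟩ := h
  · have := hxy.symm
    have := huw.symm
    grind
  · grind

lemma Movable.isMatching_deleteVerts (h : P.Movable x y) :
    (P.toSubgraph.deleteVerts {x, y}).IsMatching := by
  rintro v ⟨hv, hvxy⟩
  obtain ⟨w, hvw, hw⟩ := P.isMatching hv
  have := h.mem_iff_of_adj hvw
  refine ⟨w, ?_, fun u hu ↦ hw u (Subgraph.deleteVerts_adj.1 hu).2.2.2.2⟩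
  simp_all [hvw.snd_mem]

open Classical in
/-- The labelled matching obtained by putting the pair `x, y` into the class `j`. -/
noncomputable def move (h : P.Movable x y) (j : Option (Fin r)) : LabelledMatching G r where
  toSubgraph := P.toSubgraph.deleteVerts {x, y} ⊔ if j = none then ⊥ else G.subgraphOfAdj h.1
  isMatching := by
    split_ifs with hj
    · simpa using h.isMatching_deleteVerts
    · refine h.isMatching_deleteVerts.sup (.subgraphOfAdj h.1) ?_
      rw [h.isMatching_deleteVerts.support_eq_verts,
        (Subgraph.IsMatching.subgraphOfAdj h.1).support_eq_verts]
      exact Set.disjoint_sdiff_left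
  label v := if v = x ∨ v = y then j else P.label v
  label_eq_none_iff v := by
    have := P.label_eq_none_iff v
    by_cases hj : j = none <;>
      simp only [hj, if_true, if_false, sup_bot_eq, Subgraph.verts_sup, Subgraph.deleteVerts_verts,
        subgraphOfAdj_verts, Set.mem_union, Set.mem_sdiff, Set.mem_insert_iff,
        Set.mem_singleton_iff] <;>
      grind
  label_eq_of_adj u v huv := by
    have := P.label_eq_of_adj u v
    have := h.mem_iff_of_adj (u := u) (w := v)
    by_cases hj : j = none <;>
      simp only [hj, if_true, if_false, sup_bot_eq, Subgraph.sup_adj, Subgraph.deleteVerts_adj,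
        subgraphOfAdj_adj, Set.mem_insert_iff, Set.mem_singleton_iff] at huv <;>
      grind

lemma move_adj (h : P.Movable x y) (j : Option (Fin r)) (u w : V) :
    (P.move h j).toSubgraph.Adj u w ↔
      P.toSubgraph.Adj u w ∧ ¬ (u = x ∨ u = y) ∨ j ≠ none ∧ s(u, w) = s(x, y) := by
  have := h.mem_iff_of_adj (u := u) (w := w)
  by_cases hj : j = none <;>
    simp only [move, hj, if_true, if_false, sup_bot_eq, Subgraph.sup_adj, Subgraph.deleteVerts_adj,
      subgraphOfAdj_adj, Set.mem_insert_iff, Set.mem_singleton_iff] <;>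
    grind [Subgraph.Adj.fst_mem, Subgraph.Adj.snd_mem]

lemma residual_move_adj_iff (h : P.Movable x y) (j : Option (Fin r)) {u w : V}
    (hu : u ∉ s(x, y)) (hw : w ∉ s(x, y)) :
    (P.move h j).residual.Adj u w ↔ P.residual.Adj u w := by
  rw [Sym2.mem_iff] at hu hw
  simp only [residual, move_adj]
  simp only [move]
  grind

lemma eq_of_residual_move_adj (h : P.Movable x y) (j : Option (Fin r)) {a b : V}
    (hab : (P.move h j).residual.Adj a b) (ha : a = x ∨ a = y) :
    b ∈ s(x, y) ∧ j = none ∨ b ∉ s(x, y) ∧ j = P.label b := by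
  have hne := hab.ne
  simp only [residual, move_adj] at hab
  simp only [move] at hab
  grind

lemma disjoint_closedEdgeNeighborSet_residual_move (h : P.Movable x y) {i j : Option (Fin r)}
    (hij : i ≠ j) :
    Disjoint (closedEdgeNeighborSet (P.move h i).residual s(x, y))
      (closedEdgeNeighborSet (P.move h j).residual s(x, y)) := by
  rw [Set.disjoint_left]
  intro f hfi hfj
  obtain ⟨a, b, rfl, hi, ha⟩ := exists_eq_mk_of_mem_closedEdgeNeighborSet hfi
  have := eq_of_residual_move_adj h i hi ha
  have := eq_of_residual_move_adj h j hfj.1 ha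
  grind

lemma exists_ncard_closedEdgeNeighborSet_residual_move_lt [Fintype V] [DecidableRel G.Adj] {d : ℕ}
    (hG : ∀ v, 2 * G.degree v ≤ (r + 1) * d) (h : P.Movable x y) :
    ∃ j, (closedEdgeNeighborSet (P.move h j).residual s(x, y)).ncard < d := by
  by_contra! hle
  have hsum : ∑ j, (closedEdgeNeighborSet (P.move h j).residual s(x, y)).ncard ≤
      (closedEdgeNeighborSet G s(x, y)).ncard := by
    rw [← finsum_eq_sum_of_fintype, ← Set.ncard_iUnion_of_finite (fun _ ↦ Set.toFinite _)
      fun _ _ ↦ disjoint_closedEdgeNeighborSet_residual_move h]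
    exact Set.ncard_le_ncard
      (Set.iUnion_subset fun j ↦ closedEdgeNeighborSet_mono (residual_le _) _)
  have hlower := Finset.card_nsmul_le_sum Finset.univ _ d fun j _ ↦ hle j
  rw [Finset.card_univ, Fintype.card_option, Fintype.card_fin, smul_eq_mul] at hlower
  have := ncard_closedEdgeNeighborSet_add_one h.1
  have := hG x
  have := hG y
  lia

lemma degree_residual_lt_of_forall_le [Fintype V] [DecidableRel G.Adj] [DecidableRel P.residual.Adj]
    {d : ℕ} (hd : 0 < d) (hG : ∀ v, 2 * G.degree v ≤ (r + 1) * d)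
    (hP : ∀ Q : LabelledMatching G r, P.residual.edgeSet.ncard ≤ Q.residual.edgeSet.ncard) (x : V) :
    P.residual.degree x < d := by
  obtain hx | hx := (P.residual.degree x).eq_zero_or_pos
  · rwa [hx]
  · obtain ⟨w, hxw⟩ := (P.residual.degree_pos_iff_exists_adj x).1 hx
    obtain ⟨y, hxy⟩ := P.exists_movable hxw
    obtain ⟨j, hj⟩ := exists_ncard_closedEdgeNeighborSet_residual_move_lt hG hxy
    calc P.residual.degree x
        ≤ (closedEdgeNeighborSet P.residual s(x, y)).ncard :=
          degree_le_ncard_closedEdgeNeighborSet x y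
      _ ≤ (closedEdgeNeighborSet (P.move hxy j).residual s(x, y)).ncard :=
          ncard_closedEdgeNeighborSet_le_of_ncard_edgeSet_le (hP _)
            fun u w hu hw ↦ (residual_move_adj_iff hxy j hu hw).symm
      _ < d := hj

end LabelledMatching

section DegreeBounds

lemma cfChromIndex_le_one_of_degree_le_one {V : Type*} (G : SimpleGraph V) [LocallyFinite G]
    (hG : ∀ v, G.degree v ≤ 1) : cfChromIndex G ≤ 1 := by
  refine Nat.sInf_le ⟨fun _ ↦ 0, fun e ↦ e.ind fun u w huw ↦ ?_⟩
  have hcard : (closedEdgeNeighborSet G s(u, w)).ncard ≤ 1 := by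
    have := ncard_closedEdgeNeighborSet_add_one huw
    have := hG u
    have := hG w
    lia
  have hmem := self_mem_closedEdgeNeighborSet huw
  refine ⟨0, s(u, w), ⟨hmem.1, hmem.2, rfl⟩, fun f hf ↦ ?_⟩
  exact (Set.ncard_le_one (finite_closedEdgeNeighborSet u w)).1 hcard f ⟨hf.1, hf.2.1⟩ _ hmem

variable {V : Type*} [Fintype V]

lemma exists_degree_lt_forall_partialCFColorable_add (G : SimpleGraph V) [DecidableRel G.Adj]
    {r d : ℕ} (hd : 0 < d) (hG : ∀ v, 2 * G.degree v ≤ (r + 1) * d) :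
    ∃ (B : SimpleGraph V) (_ : DecidableRel B.Adj), (∀ v, B.degree v < d) ∧
      ∀ n, PartialCFColorable B n → PartialCFColorable G (r + n) := by
  classical
  let size (P : LabelledMatching G r) : ℕ := P.residual.edgeSet.ncard
  obtain ⟨P, hP⟩ : ∃ P, ∀ Q, size P ≤ size Q :=
    ⟨Function.argmin size, fun Q ↦ Function.argmin_le size Q⟩
  refine ⟨P.residual, inferInstance, P.degree_residual_lt_of_forall_le hd hG hP, fun n hn ↦ ?_⟩
  simpa [sdiff_sup_cancel P.residual_le] using
    P.partialCFColorable_sdiff_residual.sup hn disjoint_sdiff_self_left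

lemma partialCFColorable_of_degree_le_two_pow_succ (k : ℕ) (G : SimpleGraph V)
    [DecidableRel G.Adj] (hG : ∀ v, G.degree v ≤ 2 ^ (k + 1)) :
    PartialCFColorable G (3 * (k + 1)) := by
  induction k generalizing G with
  | zero =>
    obtain ⟨B, _, hB, hcolor⟩ :=
      exists_degree_lt_forall_partialCFColorable_add (r := 3) G one_pos fun v ↦ by grind
    have hbot : B = ⊥ := by
      refine eq_bot_iff_forall_not_adj.2 fun u w huw ↦ ?_
      exact (hB u).not_ge ((B.degree_pos_iff_exists_adj u).2 ⟨w, huw⟩)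
    exact hcolor 0 (hbot ▸ partialCFColorable_bot)
  | succ k ih =>
    obtain ⟨B, _, hB, hcolor⟩ :=
      exists_degree_lt_forall_partialCFColorable_add (r := 3) G (Nat.two_pow_pos (k + 1))
        fun v ↦ by grind
    rw [mul_add_one, add_comm]
    exact hcolor _ (ih B fun v ↦ (hB v).le)

end DegreeBounds

/-- Every finite nonempty simple graph without isolated vertices satisfies
`χ'_CF(G) ≤ 3⌈log₂ Δ(G)⌉ + 1`. -/
theorem cfChromIndex_le_three_clog_maxDegree_add_one {V : Type*} [Fintype V] [Nonempty V]
    (G : SimpleGraph V) [DecidableRel G.Adj] (hNoIso : ∀ v : V, ∃ w : V, G.Adj v w) :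
    cfChromIndex G ≤ 3 * Nat.clog 2 G.maxDegree + 1 := by
  have hdeg (v : V) : G.degree v ≤ 2 ^ Nat.clog 2 G.maxDegree :=
    (G.degree_le_maxDegree v).trans (Nat.le_pow_clog one_lt_two _)
  cases hk : Nat.clog 2 G.maxDegree with
  | zero =>
    rw [hk, pow_zero] at hdeg
    exact cfChromIndex_le_one_of_degree_le_one G hdeg
  | succ k =>
    rw [hk] at hdeg
    exact (partialCFColorable_of_degree_le_two_pow_succ k G hdeg).cfChromIndex_le
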